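/- arXiv:1506.01959 — 3 statements merged into one kernel-verified Lean document; each statement's English description precedes it below -/
import Mathlib

section
/- Let A ∈ ℝ^{I×J}, λ > 0, P*_λ = (A Aᵀ + λ I_I)⁻¹ A, F_λ(P) = ‖I_J − Pᵀ A‖_F² + λ‖P‖_F², and G_λ(P) = F_λ(P) − F_λ(P*_λ). For P ∈ ℝ^{I×J}, let [Pᵀ A]_S = (Pᵀ A + Aᵀ P)/2 denote the symmetric part of Pᵀ A. Denote by λ_1 ≥ … ≥ λ_J the eigenvalues in decreasing order of a J×J real symmetric matrix. Then for every P ∈ ℝ^{I×J}: ∑_{r=1}^J |λ_r([Pᵀ A]_S) − λ_r((P*_λ)ᵀ A)|² ≤ G_λ(P) − λ‖P − P*_λ‖_F². -/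
open Matrix BigOperators

/-- Squared Frobenius norm of a real matrix. -/
noncomputable def frobSq {m n : Type*} [Fintype m] [Fintype n] (M : Matrix m n ℝ) : ℝ :=
  ∑ i, ∑ j, (M i j) ^ 2

/-- The regularized objective `F_λ(P) = ‖I_J − Pᵀ A‖_F² + λ‖P‖_F²`. -/
noncomputable def Fpinv {I J : ℕ} (A : Matrix (Fin I) (Fin J) ℝ) (lam : ℝ)
    (P : Matrix (Fin I) (Fin J) ℝ) : ℝ :=
  frobSq ((1 : Matrix (Fin J) (Fin J) ℝ) - Pᵀ * A) + lam * frobSq P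

/-- The regularized minimizer `P*_λ = (A Aᵀ + λ I_I)⁻¹ A`. -/
noncomputable def PstarId {I J : ℕ} (A : Matrix (Fin I) (Fin J) ℝ) (lam : ℝ) :
    Matrix (Fin I) (Fin J) ℝ :=
  (A * Aᵀ + lam • (1 : Matrix (Fin I) (Fin I) ℝ))⁻¹ * A

/-!
Write `Q = P*_λ` and `D = P - Q`. The normal equation `(A Aᵀ + λ) Q = A` kills the linear term of
the quadratic function `F_λ` at `Q`, so that `G_λ(P) - λ‖D‖² = ‖Dᵀ A‖²`. Since `Qᵀ A` is symmetric,
`[Pᵀ A]_S - Qᵀ A` is the symmetric part of `Dᵀ A`, whose Frobenius norm is at most `‖Dᵀ A‖`. The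
Hoffman–Wielandt inequality bounds the eigenvalue differences by that norm: in eigenbases, the
squared norm of a difference of Hermitian matrices with eigenvalues `α` and `β` sums
`(α_i - β_j)²` against a doubly stochastic matrix, and by Birkhoff's theorem and the rearrangement
inequality such a sum is least for the identity matrix once `α` and `β` are sorted alike.
-/

section Rearrangement

variable {R ι : Type*} [Fintype ι] [LinearOrder R]

lemma sum_sub_sq_le_sum_sub_comp_perm_sq [CommRing R] [IsStrictOrderedRing R] {f g : ι → R}
    (hfg : Monovary f g) (σ : Equiv.Perm ι) :
    ∑ i, (f i - g i) ^ 2 ≤ ∑ i, (f i - g (σ i)) ^ 2 := by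
  have rearrangement : ∑ i, f i * g (σ i) ≤ ∑ i, f i * g i := hfg.sum_mul_comp_perm_le_sum_mul
  have sum_sq_comp : ∑ i, g (σ i) ^ 2 = ∑ i, g i ^ 2 := Equiv.sum_comp σ (g · ^ 2)
  simp only [sub_sq, Finset.sum_add_distrib, Finset.sum_sub_distrib, mul_assoc,
    ← Finset.mul_sum, sum_sq_comp]
  linarith

lemma sum_sub_sq_le_sum_doublyStochastic_mul_sub_sq [Field R] [IsStrictOrderedRing R]
    [DecidableEq ι] {f g : ι → R} (hfg : Monovary f g) {D : Matrix ι ι R}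
    (hD : D ∈ doublyStochastic R ι) :
    ∑ i, (f i - g i) ^ 2 ≤ ∑ i, ∑ j, D i j * (f i - g j) ^ 2 := by
  let cost : Matrix ι ι R →ₗ[R] R :=
    ∑ i, ∑ j, (f i - g j) ^ 2 • entryLinearMap R R i j
  have cost_apply (M : Matrix ι ι R) : cost M = ∑ i, ∑ j, M i j * (f i - g j) ^ 2 := by
    simp [cost, LinearMap.sum_apply, mul_comm]
  have hD' : D ∈ convexHull R {σ.permMatrix R | σ : Equiv.Perm ι} := by
    rwa [← doublyStochastic_eq_convexHull_permMatrix]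
  rw [← cost_apply]
  refine convexHull_min ?_ (convex_halfSpace_ge cost.isLinear (∑ i, (f i - g i) ^ 2)) hD'
  rintro _ ⟨σ, rfl⟩
  have cost_perm : cost (σ.permMatrix R) = ∑ i, (f i - g (σ i)) ^ 2 := by
    simp [cost_apply, Equiv.Perm.permMatrix, PEquiv.toMatrix_apply]
  exact (sum_sub_sq_le_sum_sub_comp_perm_sq hfg σ).trans_eq cost_perm.symm

end Rearrangement

section Frobenius

open scoped Matrix.Norms.Frobenius

variable {𝕜 k m n : Type*} [RCLike 𝕜] [Fintype k] [Fintype m] [Fintype n]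

lemma frobenius_norm_sq_eq_sum {α : Type*} [SeminormedAddCommGroup α] (M : Matrix m n α) :
    ‖M‖ ^ 2 = ∑ i, ∑ j, ‖M i j‖ ^ 2 := by
  rw [frobenius_norm_def, ← Real.sqrt_eq_rpow, Real.sq_sqrt (by positivity)]
  simp only [Real.rpow_two]

lemma frobSq_eq_frobenius_norm_sq (M : Matrix m n ℝ) : frobSq M = ‖M‖ ^ 2 := by
  simp only [frobSq, frobenius_norm_sq_eq_sum, Real.norm_eq_abs, sq_abs]

lemma frobenius_norm_sq_eq_re_trace (M : Matrix m n 𝕜) :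
    ‖M‖ ^ 2 = RCLike.re (trace (Mᴴ * M)) := by
  rw [frobenius_norm_sq_eq_sum, Finset.sum_comm]
  simp only [trace, diag_apply, mul_apply, conjTranspose_apply, RCLike.star_def, RCLike.conj_mul,
    ← RCLike.ofReal_pow, map_sum, RCLike.ofReal_re]

lemma frobenius_norm_add_sq (M N : Matrix m n 𝕜) :
    ‖M + N‖ ^ 2 = ‖M‖ ^ 2 + 2 * RCLike.re (trace (Mᴴ * N)) + ‖N‖ ^ 2 := by
  have cross_symm : RCLike.re (trace (Nᴴ * M)) = RCLike.re (trace (Mᴴ * N)) := by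
    rw [← RCLike.conj_re, ← RCLike.star_def, ← trace_conjTranspose, conjTranspose_mul,
      conjTranspose_conjTranspose]
  simp only [frobenius_norm_sq_eq_re_trace, conjTranspose_add, Matrix.add_mul, Matrix.mul_add,
    trace_add, map_add, cross_symm]
  ring

lemma frobenius_norm_mul_of_conjTranspose_mul_self_eq_one [DecidableEq m] {U : Matrix k m 𝕜}
    (hU : Uᴴ * U = 1) (M : Matrix m n 𝕜) : ‖U * M‖ = ‖M‖ := by
  rw [← sq_eq_sq₀ (norm_nonneg _) (norm_nonneg _), frobenius_norm_sq_eq_re_trace,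
    frobenius_norm_sq_eq_re_trace, conjTranspose_mul, Matrix.mul_assoc, ← Matrix.mul_assoc Uᴴ, hU,
    Matrix.one_mul]

lemma frobenius_norm_mul_of_self_mul_conjTranspose_eq_one [DecidableEq m] {V : Matrix m k 𝕜}
    (hV : V * Vᴴ = 1) (M : Matrix n m 𝕜) : ‖M * V‖ = ‖M‖ := by
  rw [← frobenius_norm_conjTranspose, conjTranspose_mul,
    frobenius_norm_mul_of_conjTranspose_mul_self_eq_one (by rwa [conjTranspose_conjTranspose]),
    frobenius_norm_conjTranspose]

lemma frobenius_norm_half_smul_add_conjTranspose_le (M : Matrix n n 𝕜) :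
    ‖(1 / 2 : ℝ) • (M + Mᴴ)‖ ≤ ‖M‖ := by
  calc ‖(1 / 2 : ℝ) • (M + Mᴴ)‖ = 1 / 2 * ‖M + Mᴴ‖ := by
        rw [norm_smul, Real.norm_of_nonneg (by norm_num)]
    _ ≤ 1 / 2 * (‖M‖ + ‖Mᴴ‖) := by gcongr; exact norm_add_le M Mᴴ
    _ = ‖M‖ := by rw [frobenius_norm_conjTranspose]; ring

end Frobenius

section HoffmanWielandt

open scoped Matrix.Norms.Frobenius

variable {𝕜 n : Type*} [RCLike 𝕜] [Fintype n] [DecidableEq n] {A B : Matrix n n 𝕜}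

lemma sum_norm_sq_row_eq_one {U : Matrix n n 𝕜} (hU : U ∈ unitaryGroup n 𝕜) (i : n) :
    ∑ j, ‖U i j‖ ^ 2 = 1 := by
  have diag_entry : (U * star U) i i = 1 := by
    rw [mem_unitaryGroup_iff.mp hU, one_apply_eq]
  simpa only [mul_apply, star_apply, RCLike.star_def, RCLike.mul_conj, ← RCLike.ofReal_pow, map_sum,
    RCLike.ofReal_re, RCLike.one_re] using congrArg RCLike.re diag_entry

lemma norm_sq_mem_doublyStochastic {U : Matrix n n 𝕜} (hU : U ∈ unitaryGroup n 𝕜) :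
    (of fun i j => ‖U i j‖ ^ 2) ∈ doublyStochastic ℝ n := by
  refine mem_doublyStochastic_iff_sum.mpr
    ⟨fun i j => sq_nonneg _, sum_norm_sq_row_eq_one hU, fun j => ?_⟩
  simpa using sum_norm_sq_row_eq_one (Unitary.star_mem hU) j

lemma sum_sub_sq_le_frobenius_norm_diagonal_mul_sub_mul_diagonal_sq {a b : n → ℝ}
    (hab : Monovary a b) {W : Matrix n n 𝕜} (hW : W ∈ unitaryGroup n 𝕜) :
    ∑ i, (a i - b i) ^ 2 ≤
      ‖diagonal (RCLike.ofReal ∘ a) * W - W * diagonal (RCLike.ofReal ∘ b)‖ ^ 2 := by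
  refine (sum_sub_sq_le_sum_doublyStochastic_mul_sub_sq hab
    (norm_sq_mem_doublyStochastic hW)).trans_eq ?_
  rw [frobenius_norm_sq_eq_sum]
  refine Finset.sum_congr rfl fun i _ => Finset.sum_congr rfl fun j _ => ?_
  have entry : (diagonal (RCLike.ofReal ∘ a) * W - W * diagonal (RCLike.ofReal ∘ b) :
      Matrix n n 𝕜) i j = W i j * ((a i - b j : ℝ) : 𝕜) := by
    simp only [Matrix.sub_apply, diagonal_mul, mul_diagonal, Function.comp_apply, RCLike.ofReal_sub]
    ring
  rw [entry, norm_mul, mul_pow, RCLike.norm_ofReal, sq_abs, of_apply]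

lemma exists_unitary_mul_eq_mul_diagonal_eigenvalues (hA : A.IsHermitian) :
    ∃ U ∈ unitaryGroup n 𝕜, A * U = U * diagonal (RCLike.ofReal ∘ hA.eigenvalues) := by
  refine ⟨hA.eigenvectorUnitary, hA.eigenvectorUnitary.2, ?_⟩
  rw [← hA.conjStarAlgAut_star_eigenvectorUnitary, Unitary.conjStarAlgAut_star_apply,
    ← Matrix.mul_assoc, ← Matrix.mul_assoc,
    mem_unitaryGroup_iff.mp hA.eigenvectorUnitary.2, Matrix.one_mul]

lemma monovary_eigenvalues (hA : A.IsHermitian) (hB : B.IsHermitian) :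
    Monovary hA.eigenvalues hB.eigenvalues :=
  (hA.eigenvalues₀_antitone.monovary hB.eigenvalues₀_antitone).comp_right _

/-- The **Hoffman–Wielandt inequality** for Hermitian matrices. -/
theorem sum_eigenvalues_sub_sq_le_frobenius_norm_sq (hA : A.IsHermitian) (hB : B.IsHermitian) :
    ∑ i, (hA.eigenvalues i - hB.eigenvalues i) ^ 2 ≤ ‖A - B‖ ^ 2 := by
  obtain ⟨U, hU, A_mul_U⟩ := exists_unitary_mul_eq_mul_diagonal_eigenvalues hA
  obtain ⟨V, hV, B_mul_V⟩ := exists_unitary_mul_eq_mul_diagonal_eigenvalues hB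
  have star_U_mul_A : star U * A = diagonal (RCLike.ofReal ∘ hA.eigenvalues) * star U := by
    have diagonal_isHermitian :
        (diagonal (RCLike.ofReal ∘ hA.eigenvalues) : Matrix n n 𝕜).IsHermitian :=
      isHermitian_diagonal_of_self_adjoint _ (funext fun i => RCLike.conj_ofReal _)
    simpa only [conjTranspose_mul, star_eq_conjTranspose, hA.eq, diagonal_isHermitian.eq] using
      congrArg conjTranspose A_mul_U
  have conjugated_sub : star U * (A - B) * V =
      diagonal (RCLike.ofReal ∘ hA.eigenvalues) * (star U * V) -
        (star U * V) * diagonal (RCLike.ofReal ∘ hB.eigenvalues) := by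
    rw [Matrix.mul_sub, Matrix.sub_mul, star_U_mul_A, Matrix.mul_assoc, Matrix.mul_assoc _ B,
      B_mul_V, Matrix.mul_assoc]
  have norm_conjugated : ‖star U * (A - B) * V‖ = ‖A - B‖ := by
    rw [frobenius_norm_mul_of_self_mul_conjTranspose_eq_one (mem_unitaryGroup_iff.mp hV),
      frobenius_norm_mul_of_conjTranspose_mul_self_eq_one
        (mem_unitaryGroup_iff'.mp (Unitary.star_mem hU))]
  rw [← norm_conjugated, conjugated_sub]
  exact sum_sub_sq_le_frobenius_norm_diagonal_mul_sub_mul_diagonal_sq (monovary_eigenvalues hA hB)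
    (mul_mem (Unitary.star_mem hU) hV)

lemma sum_sub_sq_le_frobenius_norm_sq_of_perm_eigenvalues
    (hA : A.IsHermitian) (hB : B.IsHermitian) {μ ν : n → ℝ} (hμν : Monovary μ ν)
    (hμ : ∃ σ : Equiv.Perm n, ∀ r, μ r = hA.eigenvalues (σ r))
    (hν : ∃ τ : Equiv.Perm n, ∀ r, ν r = hB.eigenvalues (τ r)) :
    ∑ r, (μ r - ν r) ^ 2 ≤ ‖A - B‖ ^ 2 := by
  obtain ⟨σ, hσ⟩ := hμ
  obtain ⟨τ, hτ⟩ := hν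
  calc ∑ r, (μ r - ν r) ^ 2
      ≤ ∑ r, (μ r - ν ((σ.trans τ.symm) r)) ^ 2 :=
        sum_sub_sq_le_sum_sub_comp_perm_sq hμν (σ.trans τ.symm)
    _ = ∑ r, (hA.eigenvalues (σ r) - hB.eigenvalues (σ r)) ^ 2 := by simp [hσ, hτ]
    _ = ∑ i, (hA.eigenvalues i - hB.eigenvalues i) ^ 2 :=
        Equiv.sum_comp σ fun i => (hA.eigenvalues i - hB.eigenvalues i) ^ 2
    _ ≤ ‖A - B‖ ^ 2 := sum_eigenvalues_sub_sq_le_frobenius_norm_sq hA hB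

end HoffmanWielandt

section Ridge

open scoped Matrix.Norms.Frobenius

variable {𝕜 k m n : Type*} [RCLike 𝕜] [Fintype k] [Fintype m] [Fintype n]

lemma ridge_objective_eq_add_of_normal_equation {A : Matrix m n 𝕜} {B : Matrix k n 𝕜} {lam : ℝ}
    {Q : Matrix m k 𝕜} (hQ : A * Aᴴ * Q + lam • Q = A * Bᴴ) (P : Matrix m k 𝕜) :
    ‖B - Pᴴ * A‖ ^ 2 + lam * ‖P‖ ^ 2 =
      (‖B - Qᴴ * A‖ ^ 2 + lam * ‖Q‖ ^ 2) + (‖(P - Q)ᴴ * A‖ ^ 2 + lam * ‖P - Q‖ ^ 2) := by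
  obtain ⟨D, rfl⟩ : ∃ D, P = D + Q := ⟨P - Q, (sub_add_cancel P Q).symm⟩
  have residual : B - (D + Q)ᴴ * A = -(Dᴴ * A) + (B - Qᴴ * A) := by
    rw [conjTranspose_add, Matrix.add_mul]; abel
  have gradient : A * (B - Qᴴ * A)ᴴ = lam • Q := by
    rw [conjTranspose_sub, conjTranspose_mul, conjTranspose_conjTranspose, Matrix.mul_sub, ← hQ,
      Matrix.mul_assoc, add_sub_cancel_left]
  have cross_term :
      RCLike.re (trace ((B - Qᴴ * A)ᴴ * (Dᴴ * A))) = lam * RCLike.re (trace (Dᴴ * Q)) := by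
    rw [trace_mul_comm, Matrix.mul_assoc, gradient, Matrix.mul_smul, trace_smul, RCLike.smul_re]
  rw [add_sub_cancel_right, residual, add_comm (-_), frobenius_norm_add_sq,
    frobenius_norm_add_sq D, Matrix.mul_neg, trace_neg, map_neg, cross_term, norm_neg]
  ring

/-- For `lam = 0` the normal equation `hQ` has a solution for every `A`: the conjugate transpose `Q`
of the Moore–Penrose inverse of `A`. -/
theorem eigenvalue_perturbation_bound_general [DecidableEq n] (A : Matrix m n 𝕜) (lam : ℝ)
    (P Q : Matrix m n 𝕜) (hQ : A * Aᴴ * Q + lam • Q = A)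
    (hS : ((1 / 2 : ℝ) • (Pᴴ * A + Aᴴ * P)).IsHermitian) (hT : (Qᴴ * A).IsHermitian)
    {μ ν : n → ℝ} (hμν : Monovary μ ν)
    (hμ : ∃ σ : Equiv.Perm n, ∀ r, μ r = hS.eigenvalues (σ r))
    (hν : ∃ τ : Equiv.Perm n, ∀ r, ν r = hT.eigenvalues (τ r)) :
    ∑ r, (μ r - ν r) ^ 2 ≤
      (‖1 - Pᴴ * A‖ ^ 2 + lam * ‖P‖ ^ 2) - (‖1 - Qᴴ * A‖ ^ 2 + lam * ‖Q‖ ^ 2) -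
        lam * ‖P - Q‖ ^ 2 := by
  set D := P - Q with hD
  have symm_part_sub : (1 / 2 : ℝ) • (Pᴴ * A + Aᴴ * P) - Qᴴ * A =
      (1 / 2 : ℝ) • (Dᴴ * A + (Dᴴ * A)ᴴ) := by
    have hT' : Aᴴ * Q = Qᴴ * A := by simpa using hT.eq
    rw [conjTranspose_mul, conjTranspose_conjTranspose, hD, conjTranspose_sub, Matrix.sub_mul,
      Matrix.mul_sub, hT']
    module
  calc ∑ r, (μ r - ν r) ^ 2
      ≤ ‖(1 / 2 : ℝ) • (Pᴴ * A + Aᴴ * P) - Qᴴ * A‖ ^ 2 :=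
        sum_sub_sq_le_frobenius_norm_sq_of_perm_eigenvalues hS hT hμν hμ hν
    _ ≤ ‖Dᴴ * A‖ ^ 2 := by
        rw [symm_part_sub]
        gcongr
        exact frobenius_norm_half_smul_add_conjTranspose_le _
    _ = _ := by
        rw [ridge_objective_eq_add_of_normal_equation (B := 1) (by simpa using hQ) P, ← hD]
        ring

end Ridge

lemma pstarId_normal_equation {I J : ℕ} (A : Matrix (Fin I) (Fin J) ℝ) {lam : ℝ}
    (hlam : 0 < lam) : A * Aᵀ * PstarId A lam + lam • PstarId A lam = A := by
  have gram_posSemidef : (A * Aᵀ).PosSemidef := by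
    simpa using posSemidef_self_mul_conjTranspose A
  have regularized_posDef : (A * Aᵀ + lam • (1 : Matrix (Fin I) (Fin I) ℝ)).PosDef :=
    PosDef.posSemidef_add gram_posSemidef (PosDef.one.smul hlam)
  calc A * Aᵀ * PstarId A lam + lam • PstarId A lam
      = (A * Aᵀ + lam • (1 : Matrix (Fin I) (Fin I) ℝ)) * PstarId A lam := by
        rw [Matrix.add_mul, Matrix.smul_mul, Matrix.one_mul]
    _ = A := mul_nonsing_inv_cancel_left _ A
        ((isUnit_iff_isUnit_det _).mp regularized_posDef.isUnit)

/-- Eigenvalue perturbation bound: if `λ_1 ≥ … ≥ λ_J` are the decreasingly ordered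
eigenvalues of the symmetric part `[Pᵀ A]_S = (Pᵀ A + Aᵀ P)/2` and of `(P*_λ)ᵀ A`
respectively, then `∑_r |λ_r([Pᵀ A]_S) − λ_r((P*_λ)ᵀ A)|² ≤ G_λ(P) − λ‖P − P*_λ‖_F²`,
where `G_λ(P) = F_λ(P) − F_λ(P*_λ)`. -/
theorem eigenvalue_perturbation_bound {I J : ℕ}
    (A : Matrix (Fin I) (Fin J) ℝ) (lam : ℝ) (hlam : 0 < lam)
    (P : Matrix (Fin I) (Fin J) ℝ)
    (hS : ((1 / 2 : ℝ) • (Pᵀ * A + Aᵀ * P)).IsHermitian)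
    (hT : ((PstarId A lam)ᵀ * A).IsHermitian)
    (μ ν : Fin J → ℝ) (hμa : Antitone μ) (hνa : Antitone ν)
    (hμ : ∃ σ : Equiv.Perm (Fin J), ∀ r, μ r = hS.eigenvalues (σ r))
    (hν : ∃ σ : Equiv.Perm (Fin J), ∀ r, ν r = hT.eigenvalues (σ r)) :
    ∑ r, |μ r - ν r| ^ 2 ≤
      (Fpinv A lam P - Fpinv A lam (PstarId A lam)) -
        lam * frobSq (P - PstarId A lam) := by
  simpa only [sq_abs, Fpinv, frobSq_eq_frobenius_norm_sq,
    conjTranspose_eq_transpose_of_trivial] using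
    eigenvalue_perturbation_bound_general A lam P (PstarId A lam)
      (pstarId_normal_equation A hlam) hS hT (hμa.monovary hνa) hμ hν
end

section
/- Let A ∈ ℝ^{I×J}, λ > 0, P*_λ = (A Aᵀ + λ I_I)⁻¹ A, F_λ(P) = ‖I_J − Pᵀ A‖_F² + λ‖P‖_F², and G_λ(P) = F_λ(P) − F_λ(P*_λ). For a real J×J matrix N, let σ_1(N) ≥ … ≥ σ_J(N) denote its singular values (the square roots of the eigenvalues of Nᵀ N) arranged in decreasing order. Then for every P ∈ ℝ^{I×J}: ∑_{r=1}^J |σ_r(Pᵀ A) − σ_r((P*_λ)ᵀ A)|² ≤ G_λ(P) − λ‖P − P*_λ‖_F². -/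
/-!
Write `D = P - P*`. Since `P*` solves the normal equation `(A Aᵀ + λ) P* = A`, completing the square
gives `F(P) - F(P*) = ‖Dᵀ A‖² + λ ‖D‖²`, so the right-hand side of the bound is exactly
`‖Pᵀ A - P*ᵀ A‖²`, and what remains is Mirsky's inequality `∑ (σ_r - τ_r)² ≤ ‖M - N‖²`.

After expanding both squares, Mirsky's inequality becomes von Neumann's trace inequality
`Re tr(Mᴴ N) ≤ ∑ σ_r τ_r`. For singular value decompositions `M = U Σ Vᴴ` and `N = X T Yᴴ`, the
trace is `∑ σ_r τ_s C_rs conj(B_rs)` with `C = Uᴴ X` and `B = Vᴴ Y` unitary. By AM-GM it is at most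
the average of `∑ σ_r τ_s |C_rs|²` and `∑ σ_r τ_s |B_rs|²`, whose weights are doubly stochastic; by
Birkhoff's theorem and the rearrangement inequality each of these is at most `∑ σ_r τ_r`.
-/

open Matrix BigOperators

open RCLike (re ofReal)

theorem dotProduct_mulVec_le_of_mem_doublyStochastic {R n : Type*} [Fintype n] [DecidableEq n]
    [Field R] [LinearOrder R] [IsStrictOrderedRing R] {f g : n → R} (hfg : Monovary f g)
    {D : Matrix n n R} (hD : D ∈ doublyStochastic R n) : f ⬝ᵥ (D *ᵥ g) ≤ f ⬝ᵥ g := by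
  obtain ⟨w, hw_nonneg, hw_sum, rfl⟩ := exists_eq_sum_perm_of_mem_doublyStochastic hD
  calc f ⬝ᵥ ((∑ π, w π • π.permMatrix R) *ᵥ g)
      = ∑ π : Equiv.Perm n, w π * ∑ i, f i * g (π i) := by
        simp only [Matrix.sum_mulVec, dotProduct_sum, smul_mulVec, dotProduct_smul,
          permMatrix_mulVec, smul_eq_mul]
        rfl
    _ ≤ ∑ π, w π * (f ⬝ᵥ g) := Finset.sum_le_sum fun π _ ↦
        mul_le_mul_of_nonneg_left hfg.sum_mul_comp_perm_le_sum_mul (hw_nonneg π)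
    _ = f ⬝ᵥ g := by rw [← Finset.sum_mul, hw_sum, one_mul]

theorem submatrix_mem_unitaryGroup {α m n : Type*} [CommRing α] [StarRing α] [Fintype m]
    [DecidableEq m] [Fintype n] [DecidableEq n] {U : Matrix n n α} (hU : U ∈ unitaryGroup n α)
    (e₁ e₂ : m ≃ n) : U.submatrix e₁ e₂ ∈ unitaryGroup m α := by
  rw [mem_unitaryGroup_iff, star_eq_conjTranspose, conjTranspose_submatrix, submatrix_mul_equiv,
    ← star_eq_conjTranspose, mem_unitaryGroup_iff.1 hU, submatrix_one_equiv]

theorem trace_conjTranspose_mul_of_factors {α k l m n p q : Type*} [CommSemiring α] [StarRing α]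
    [Fintype k] [Fintype l] [Fintype m] [Fintype n] [Fintype p] [Fintype q]
    (U : Matrix m n α) (S : Matrix n k α) (V : Matrix l k α)
    (X : Matrix m p α) (T : Matrix p q α) (Y : Matrix l q α) :
    ((U * S * Vᴴ)ᴴ * (X * T * Yᴴ)).trace = (Sᴴ * (Uᴴ * X) * T * (Vᴴ * Y)ᴴ).trace := by
  simp only [conjTranspose_mul, conjTranspose_conjTranspose]
  rw [Matrix.mul_assoc V, trace_mul_comm V]
  simp only [Matrix.mul_assoc]

theorem conjTranspose_diagonal_ofReal {𝕜 n : Type*} [RCLike 𝕜] [DecidableEq n] (σ : n → ℝ) :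
    (diagonal (ofReal ∘ σ) : Matrix n n 𝕜)ᴴ = diagonal (ofReal ∘ σ) := by
  rw [diagonal_conjTranspose]
  exact congrArg diagonal (funext fun i ↦ RCLike.conj_ofReal (σ i))

theorem exists_orthonormalBasis_norm_smul_eq {𝕜 ι E : Type*} [RCLike 𝕜] [Fintype ι]
    [NormedAddCommGroup E] [InnerProductSpace 𝕜 E] [FiniteDimensional 𝕜 E]
    (hι : Module.finrank 𝕜 E = Fintype.card ι) {f : ι → E}
    (hf : Pairwise fun i j ↦ inner 𝕜 (f i) (f j) = 0) :
    ∃ b : OrthonormalBasis ι 𝕜 E, ∀ i, (‖f i‖ : 𝕜) • b i = f i := by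
  have orthonormal_normalized :
      Orthonormal 𝕜 ({i | f i ≠ 0}.domRestrict fun i ↦ (‖f i‖⁻¹ : 𝕜) • f i) := by
    refine ⟨fun i ↦ norm_smul_inv_norm i.2, fun i j hij ↦ ?_⟩
    simp only [Set.domRestrict_apply, inner_smul_left, inner_smul_right,
      hf (Subtype.coe_ne_coe.2 hij), mul_zero]
  obtain ⟨b, hb⟩ := orthonormal_normalized.exists_orthonormalBasis_extension_of_card_eq hι
  refine ⟨b, fun i ↦ ?_⟩
  by_cases hi : f i = 0
  · rw [hi, norm_zero, RCLike.ofReal_zero, zero_smul]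
  · rw [hb i hi, smul_inv_smul₀ (RCLike.ofReal_ne_zero.2 (norm_ne_zero_iff.2 hi))]

section SingularValues

variable {𝕜 n : Type*} [RCLike 𝕜] [Fintype n] [DecidableEq n]

theorem map_norm_sq_mem_doublyStochastic {U : Matrix n n 𝕜} (hU : U ∈ unitaryGroup n 𝕜) :
    U.map (‖·‖ ^ 2) ∈ doublyStochastic ℝ n := by
  refine mem_doublyStochastic_iff_sum.2 ⟨fun _ _ ↦ sq_nonneg _, fun i ↦ ?_, fun j ↦ ?_⟩
  · have row_self : (U * star U) i i = 1 := by rw [mem_unitaryGroup_iff.1 hU, one_apply_eq]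
    simp only [mul_apply, star_apply, RCLike.star_def, RCLike.mul_conj] at row_self
    exact_mod_cast row_self
  · have column_self : (star U * U) j j = 1 := by rw [mem_unitaryGroup_iff'.1 hU, one_apply_eq]
    simp only [mul_apply, star_apply, RCLike.star_def, RCLike.conj_mul] at column_self
    exact_mod_cast column_self

theorem re_trace_diagonal_mul_diagonal_mul_le {B C : Matrix n n 𝕜} (hB : B ∈ unitaryGroup n 𝕜)
    (hC : C ∈ unitaryGroup n 𝕜) {σ τ : n → ℝ} (hσ : 0 ≤ σ) (hτ : 0 ≤ τ) (hστ : Monovary σ τ) :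
    re (diagonal (ofReal ∘ σ) * C * diagonal (ofReal ∘ τ) * Bᴴ).trace ≤ σ ⬝ᵥ τ := by
  have entry_le (i j : n) : re ((σ i : 𝕜) * C i j * (τ j : 𝕜) * star (B i j)) ≤
      (σ i * (‖C i j‖ ^ 2 * τ j) + σ i * (‖B i j‖ ^ 2 * τ j)) / 2 := by
    calc re ((σ i : 𝕜) * C i j * (τ j : 𝕜) * star (B i j))
        ≤ ‖(σ i : 𝕜) * C i j * (τ j : 𝕜) * star (B i j)‖ := RCLike.re_le_norm _
      _ = σ i * τ j * (‖C i j‖ * ‖B i j‖) := by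
        simp only [norm_mul, norm_star, RCLike.norm_ofReal, abs_of_nonneg (hσ i),
          abs_of_nonneg (hτ j)]
        ring
      _ ≤ σ i * τ j * ((‖C i j‖ ^ 2 + ‖B i j‖ ^ 2) / 2) := by
        refine mul_le_mul_of_nonneg_left ?_ (mul_nonneg (hσ i) (hτ j))
        linarith [two_mul_le_add_sq ‖C i j‖ ‖B i j‖]
      _ = _ := by ring
  calc re (diagonal (ofReal ∘ σ) * C * diagonal (ofReal ∘ τ) * Bᴴ).trace
      = ∑ i, ∑ j, re ((σ i : 𝕜) * C i j * (τ j : 𝕜) * star (B i j)) := by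
        simp only [trace, diag, Matrix.mul_apply (N := Bᴴ), mul_diagonal, diagonal_mul,
          conjTranspose_apply, map_sum, Function.comp_apply]
    _ ≤ ∑ i, ∑ j, (σ i * (‖C i j‖ ^ 2 * τ j) + σ i * (‖B i j‖ ^ 2 * τ j)) / 2 :=
        Finset.sum_le_sum fun i _ ↦ Finset.sum_le_sum fun j _ ↦ entry_le i j
    _ = (σ ⬝ᵥ (C.map (‖·‖ ^ 2) *ᵥ τ) + σ ⬝ᵥ (B.map (‖·‖ ^ 2) *ᵥ τ)) / 2 := by
        simp only [dotProduct, mulVec, map_apply, Finset.mul_sum, ← Finset.sum_div,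
          Finset.sum_add_distrib]
    _ ≤ σ ⬝ᵥ τ := by
        linarith [dotProduct_mulVec_le_of_mem_doublyStochastic hστ
            (map_norm_sq_mem_doublyStochastic hC),
          dotProduct_mulVec_le_of_mem_doublyStochastic hστ (map_norm_sq_mem_doublyStochastic hB)]

theorem exists_unitary_mul_diagonal_eq {M : Matrix n n 𝕜} {σ : n → ℝ} (hσ : 0 ≤ σ)
    (hM : Mᴴ * M = diagonal (ofReal ∘ (σ ^ 2))) :
    ∃ U ∈ unitaryGroup n 𝕜, M = U * diagonal (ofReal ∘ σ) := by
  let column (j : n) : EuclideanSpace 𝕜 n := WithLp.toLp 2 (M.col j)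
  have inner_column (i j : n) :
      inner 𝕜 (column i) (column j) = diagonal (ofReal ∘ (σ ^ 2) : n → 𝕜) i j := by
    rw [← hM, EuclideanSpace.inner_toLp_toLp, dotProduct_comm]
    rfl
  have norm_column (j : n) : ‖column j‖ = σ j := by
    have norm_sq_column : ‖column j‖ ^ 2 = σ j ^ 2 := by
      rw [← inner_self_eq_norm_sq (𝕜 := 𝕜), inner_column, diagonal_apply_eq, Function.comp_apply,
        RCLike.ofReal_re, Pi.pow_apply]
    exact (sq_eq_sq₀ (norm_nonneg _) (hσ j)).1 norm_sq_column
  obtain ⟨b, hb⟩ := exists_orthonormalBasis_norm_smul_eq (𝕜 := 𝕜) finrank_euclideanSpace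
    fun i j hij ↦ (inner_column i j).trans (diagonal_apply_ne _ hij)
  refine ⟨(EuclideanSpace.basisFun n 𝕜).toBasis.toMatrix b,
    (EuclideanSpace.basisFun n 𝕜).toMatrix_orthonormalBasis_mem_unitary b, ?_⟩
  ext i j
  have entry_eq := congrArg (fun v : EuclideanSpace 𝕜 n ↦ v i) (hb j)
  rw [norm_column] at entry_eq
  rw [mul_diagonal, mul_comm]
  exact entry_eq.symm

/-- `σ` lists the singular values of the square matrix `M` with multiplicity, in any order; encoded
by the existence of a singular value decomposition of `M` with middle factor `diagonal σ`. -/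
def HasSingularValues (M : Matrix n n 𝕜) (σ : n → ℝ) : Prop :=
  0 ≤ σ ∧ ∃ U ∈ unitaryGroup n 𝕜, ∃ V ∈ unitaryGroup n 𝕜, M = U * diagonal (ofReal ∘ σ) * Vᴴ

namespace HasSingularValues

variable {M N : Matrix n n 𝕜} {σ τ : n → ℝ}

theorem comp_perm (hM : HasSingularValues M σ) (π : Equiv.Perm n) :
    HasSingularValues M (σ ∘ π) := by
  obtain ⟨hσ, U, hU, V, hV, rfl⟩ := hM
  refine ⟨fun i ↦ hσ (π i), U.submatrix id π, submatrix_mem_unitaryGroup hU (.refl n) π,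
    V.submatrix id π, submatrix_mem_unitaryGroup hV (.refl n) π, ?_⟩
  rw [← Function.comp_assoc, ← submatrix_diagonal_equiv, conjTranspose_submatrix,
    submatrix_mul_equiv, submatrix_mul_equiv, submatrix_id_id]

theorem re_trace_conjTranspose_mul_self (hM : HasSingularValues M σ) :
    re (Mᴴ * M).trace = σ ⬝ᵥ σ := by
  obtain ⟨-, U, hU, V, hV, rfl⟩ := hM
  rw [trace_conjTranspose_mul_of_factors, conjTranspose_diagonal_ofReal,
    ← star_eq_conjTranspose U, ← star_eq_conjTranspose V, mem_unitaryGroup_iff'.1 hU,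
    mem_unitaryGroup_iff'.1 hV, conjTranspose_one, Matrix.mul_one, Matrix.mul_one,
    diagonal_mul_diagonal, trace_diagonal, map_sum]
  exact Finset.sum_congr rfl fun i _ ↦ by
    rw [Function.comp_apply, ← RCLike.ofReal_mul, RCLike.ofReal_re]

theorem re_trace_conjTranspose_mul_le (hM : HasSingularValues M σ) (hN : HasSingularValues N τ)
    (hστ : Monovary σ τ) : re (Mᴴ * N).trace ≤ σ ⬝ᵥ τ := by
  obtain ⟨hσ, U, hU, V, hV, rfl⟩ := hM
  obtain ⟨hτ, X, hX, Y, hY, rfl⟩ := hN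
  rw [trace_conjTranspose_mul_of_factors, conjTranspose_diagonal_ofReal]
  exact re_trace_diagonal_mul_diagonal_mul_le (mul_mem (Unitary.star_mem hV) hY)
    (mul_mem (Unitary.star_mem hU) hX) hσ hτ hστ

theorem sum_sq_sub_le (hM : HasSingularValues M σ) (hN : HasSingularValues N τ)
    (hστ : Monovary σ τ) : ∑ i, (σ i - τ i) ^ 2 ≤ re ((M - N)ᴴ * (M - N)).trace := by
  have re_trace_symm : re (Nᴴ * M).trace = re (Mᴴ * N).trace := by
    rw [← RCLike.conj_re, ← RCLike.star_def, ← trace_conjTranspose, conjTranspose_mul,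
      conjTranspose_conjTranspose]
  calc ∑ i, (σ i - τ i) ^ 2
      = σ ⬝ᵥ σ - 2 * (σ ⬝ᵥ τ) + τ ⬝ᵥ τ := by
        simp only [dotProduct, Finset.mul_sum, ← Finset.sum_sub_distrib, ← Finset.sum_add_distrib]
        exact Finset.sum_congr rfl fun i _ ↦ by ring
    _ ≤ re (Mᴴ * M).trace - 2 * re (Mᴴ * N).trace + re (Nᴴ * N).trace := by
        rw [hM.re_trace_conjTranspose_mul_self, hN.re_trace_conjTranspose_mul_self]
        linarith [hM.re_trace_conjTranspose_mul_le hN hστ]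
    _ = re ((M - N)ᴴ * (M - N)).trace := by
        simp only [conjTranspose_sub, Matrix.sub_mul, Matrix.mul_sub, trace_sub, map_sub,
          re_trace_symm]
        ring

end HasSingularValues

theorem hasSingularValues_sqrt_eigenvalues {M : Matrix n n 𝕜} (hM : (Mᴴ * M).IsHermitian) :
    HasSingularValues M fun i ↦ √(hM.eigenvalues i) := by
  let E : Matrix n n 𝕜 := hM.eigenvectorUnitary
  have hE : E ∈ unitaryGroup n 𝕜 := hM.eigenvectorUnitary.2
  have gram_mul_eigenvectors : (M * E)ᴴ * (M * E) =
      diagonal (ofReal ∘ ((fun i ↦ √(hM.eigenvalues i)) ^ 2)) := by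
    have sqrt_sq : (fun i ↦ √(hM.eigenvalues i)) ^ 2 = hM.eigenvalues :=
      funext fun i ↦ Real.sq_sqrt (eigenvalues_conjTranspose_mul_self_nonneg M i)
    rw [sqrt_sq, ← hM.conjStarAlgAut_star_eigenvectorUnitary, Unitary.conjStarAlgAut_star_apply,
      conjTranspose_mul]
    simp only [star_eq_conjTranspose, Matrix.mul_assoc, E]
  obtain ⟨U, hU, hMU⟩ := exists_unitary_mul_diagonal_eq (fun _ ↦ Real.sqrt_nonneg _)
    gram_mul_eigenvectors
  refine ⟨fun _ ↦ Real.sqrt_nonneg _, U, hU, E, hE, ?_⟩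
  rw [← hMU, Matrix.mul_assoc, ← star_eq_conjTranspose, mem_unitaryGroup_iff.1 hE, Matrix.mul_one]

end SingularValues

theorem posDef_mul_transpose_add_smul_one {m n : Type*} [Finite m] [DecidableEq m] [Fintype n]
    (A : Matrix m n ℝ) {c : ℝ} (hc : 0 < c) : (A * Aᵀ + c • (1 : Matrix m m ℝ)).PosDef :=
  PosDef.posSemidef_add (posSemidef_self_mul_conjTranspose A) (PosDef.one.smul hc)

section FrobSq

variable {m n : Type*} [Fintype m] [Fintype n]

theorem frobSq_eq_trace (M : Matrix m n ℝ) : frobSq M = (Mᵀ * M).trace := by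
  simp only [frobSq, trace, diag, mul_apply, transpose_apply, ← sq]
  exact Finset.sum_comm

theorem frobSq_add (M N : Matrix m n ℝ) :
    frobSq (M + N) = frobSq M + 2 * (Mᵀ * N).trace + frobSq N := by
  have trace_symm : (Nᵀ * M).trace = (Mᵀ * N).trace := by
    rw [← trace_transpose, transpose_mul, transpose_transpose]
  simp only [frobSq_eq_trace, transpose_add, Matrix.add_mul, Matrix.mul_add, trace_add, trace_symm]
  ring

theorem frobSq_sub (M N : Matrix m n ℝ) :
    frobSq (M - N) = frobSq M - 2 * (Mᵀ * N).trace + frobSq N := by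
  have frobSq_neg : frobSq (-N) = frobSq N := by simp only [frobSq, Matrix.neg_apply, neg_sq]
  rw [sub_eq_add_neg, frobSq_add, frobSq_neg, Matrix.mul_neg, trace_neg]
  ring

end FrobSq

section RegularizedLeastSquares

variable {I J : ℕ} {A : Matrix (Fin I) (Fin J) ℝ} {lam : ℝ}

theorem normal_equation_PstarId (hA : IsUnit (A * Aᵀ + lam • (1 : Matrix (Fin I) (Fin I) ℝ))) :
    (A * Aᵀ + lam • (1 : Matrix (Fin I) (Fin I) ℝ)) * PstarId A lam = A :=
  mul_nonsing_inv_cancel_left _ A ((isUnit_iff_isUnit_det _).1 hA)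

theorem Fpinv_eq_add_of_normal_equation {Q : Matrix (Fin I) (Fin J) ℝ}
    (hQ : (A * Aᵀ + lam • (1 : Matrix (Fin I) (Fin I) ℝ)) * Q = A) (P : Matrix (Fin I) (Fin J) ℝ) :
    Fpinv A lam P = Fpinv A lam Q + frobSq (Pᵀ * A - Qᵀ * A) + lam * frobSq (P - Q) := by
  obtain ⟨D, rfl⟩ : ∃ D, P = Q + D := ⟨P - Q, (add_sub_cancel Q P).symm⟩
  have residual_eq : A * (1 - Qᵀ * A)ᵀ = lam • Q := by
    rw [Matrix.add_mul, smul_mul, Matrix.one_mul, ← eq_sub_iff_add_eq'] at hQ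
    simp only [hQ, transpose_sub, transpose_one, transpose_mul, transpose_transpose,
      Matrix.mul_sub, Matrix.mul_one, Matrix.mul_assoc]
  have cross_term : ((1 - Qᵀ * A)ᵀ * (Dᵀ * A)).trace = lam * (Qᵀ * D).trace := by
    rw [trace_mul_comm, Matrix.mul_assoc, residual_eq, Matrix.mul_smul, trace_smul, smul_eq_mul,
      ← trace_transpose (Dᵀ * Q), transpose_mul, transpose_transpose]
  have residual_add : 1 - (Q + D)ᵀ * A = (1 - Qᵀ * A) - Dᵀ * A := by
    rw [transpose_add, Matrix.add_mul, sub_sub]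
  have image_sub : (Q + D)ᵀ * A - Qᵀ * A = Dᵀ * A := by
    rw [transpose_add, Matrix.add_mul, add_sub_cancel_left]
  rw [Fpinv, Fpinv, residual_add, image_sub, add_sub_cancel_left, frobSq_sub, frobSq_add,
    cross_term]
  ring

end RegularizedLeastSquares

theorem singular_value_perturbation_bound_general {I J : ℕ}
    (A : Matrix (Fin I) (Fin J) ℝ) (lam : ℝ)
    (hA : IsUnit (A * Aᵀ + lam • (1 : Matrix (Fin I) (Fin I) ℝ)))
    (P : Matrix (Fin I) (Fin J) ℝ)
    (hS : ((Pᵀ * A)ᵀ * (Pᵀ * A)).IsHermitian)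
    (hT : (((PstarId A lam)ᵀ * A)ᵀ * ((PstarId A lam)ᵀ * A)).IsHermitian)
    (σs τs : Fin J → ℝ) (hστ : Monovary σs τs)
    (hσ : ∃ π : Equiv.Perm (Fin J), ∀ r, σs r = Real.sqrt (hS.eigenvalues (π r)))
    (hτ : ∃ π : Equiv.Perm (Fin J), ∀ r, τs r = Real.sqrt (hT.eigenvalues (π r))) :
    ∑ r, |σs r - τs r| ^ 2 ≤
      (Fpinv A lam P - Fpinv A lam (PstarId A lam)) -
        lam * frobSq (P - PstarId A lam) := by
  obtain ⟨π, hπ⟩ := hσ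
  obtain ⟨ρ, hρ⟩ := hτ
  have hσs : HasSingularValues (Pᵀ * A) σs :=
    funext hπ ▸ (hasSingularValues_sqrt_eigenvalues hS).comp_perm π
  have hτs : HasSingularValues ((PstarId A lam)ᵀ * A) τs :=
    funext hρ ▸ (hasSingularValues_sqrt_eigenvalues hT).comp_perm ρ
  calc ∑ r, |σs r - τs r| ^ 2
      = ∑ r, (σs r - τs r) ^ 2 := by simp only [sq_abs]
    _ ≤ frobSq (Pᵀ * A - (PstarId A lam)ᵀ * A) := by
      rw [frobSq_eq_trace]
      exact hσs.sum_sq_sub_le hτs hστ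
    _ = _ := by
      rw [Fpinv_eq_add_of_normal_equation (normal_equation_PstarId hA) P]
      ring

/-- Singular value perturbation bound: if `σ_1 ≥ … ≥ σ_J` and `τ_1 ≥ … ≥ τ_J` are the
decreasingly ordered singular values (square roots of the eigenvalues of `NᵀN`) of
`Pᵀ A` and of `(P*_λ)ᵀ A` respectively, then
`∑_r |σ_r − τ_r|² ≤ G_λ(P) − λ‖P − P*_λ‖_F²`, where `G_λ(P) = F_λ(P) − F_λ(P*_λ)`. -/
theorem singular_value_perturbation_bound {I J : ℕ}
    (A : Matrix (Fin I) (Fin J) ℝ) (lam : ℝ) (hlam : 0 < lam)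
    (P : Matrix (Fin I) (Fin J) ℝ)
    (hS : ((Pᵀ * A)ᵀ * (Pᵀ * A)).IsHermitian)
    (hT : (((PstarId A lam)ᵀ * A)ᵀ * ((PstarId A lam)ᵀ * A)).IsHermitian)
    (σs τs : Fin J → ℝ) (hσa : Antitone σs) (hτa : Antitone τs)
    (hσ : ∃ π : Equiv.Perm (Fin J), ∀ r, σs r = Real.sqrt (hS.eigenvalues (π r)))
    (hτ : ∃ π : Equiv.Perm (Fin J), ∀ r, τs r = Real.sqrt (hT.eigenvalues (π r))) :
    ∑ r, |σs r - τs r| ^ 2 ≤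
      (Fpinv A lam P - Fpinv A lam (PstarId A lam)) -
        lam * frobSq (P - PstarId A lam) :=
  singular_value_perturbation_bound_general A lam
    (posDef_mul_transpose_add_smul_one A hlam).isUnit P hS hT σs τs (hσa.monovary hτa) hσ hτ
end

section
/- Let A ∈ ℝ^{I×J}, λ ≥ 0, and F_λ(P) = ‖I_J − Pᵀ A‖_F² + λ‖P‖_F². Then for every P ∈ ℝ^{I×J}: F_λ(P) ≥ J − rank(A). Moreover, for λ > 0 the minimum value satisfies F_λ(P*_λ) ≤ J, where P*_λ = (A Aᵀ + λ I_I)⁻¹ A. -/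
open Matrix BigOperators

/-!
For the lower bound, `B = Pᵀ A` kills the kernel of `A`, so `1 - B` is the identity on a space of
dimension at least `J - rank A`; restricting a matrix to a subspace does not increase its Frobenius
norm, and the restriction here has squared norm equal to that dimension.

For the upper bound, `P*_λ` satisfies the normal equation `λ P = A (1 - Pᵀ A)ᵀ`, which says that
the gradient of the convex function `F_λ` vanishes there. Hence `F_λ(P*_λ) ≤ F_λ(0) = J`.
-/

section Frobenius

variable {m n k : Type*} [Fintype m] [Fintype n] [Fintype k]

theorem frobSq_eq_trace_transpose_mul_self (M : Matrix m n ℝ) : frobSq M = trace (Mᵀ * M) := by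
  rw [frobSq, Finset.sum_comm]
  simp [trace, Matrix.mul_apply, sq]

theorem frobSq_nonneg (M : Matrix m n ℝ) : 0 ≤ frobSq M := by
  unfold frobSq
  positivity

theorem frobSq_zero : frobSq (0 : Matrix m n ℝ) = 0 := by
  simp [frobSq]

theorem frobSq_eq_card_of_transpose_mul_self_eq_one [DecidableEq n] {U : Matrix m n ℝ}
    (hU : Uᵀ * U = 1) : frobSq U = Fintype.card n := by
  rw [frobSq_eq_trace_transpose_mul_self, hU, trace_one]

-- The gradient inequality `f M + ⟪∇f M, N - M⟫ ≤ f N` for the convex function `f = frobSq`.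
theorem frobSq_add_two_mul_trace_le (M N : Matrix m n ℝ) :
    frobSq M + 2 * trace (Mᵀ * (N - M)) ≤ frobSq N := by
  have h_sq : 0 ≤ frobSq (N - M) := frobSq_nonneg _
  have h_symm : trace (Nᵀ * M) = trace (Mᵀ * N) := by
    rw [← trace_transpose, transpose_mul, transpose_transpose]
  simp only [frobSq_eq_trace_transpose_mul_self, transpose_sub, Matrix.sub_mul, Matrix.mul_sub,
    trace_sub] at h_sq ⊢
  linarith

theorem frobSq_mul_le_of_transpose_mul_self_eq_one [DecidableEq k] {U : Matrix n k ℝ}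
    (hU : Uᵀ * U = 1) (M : Matrix m n ℝ) : frobSq (M * U) ≤ frobSq M := by
  set N := M * U * Uᵀ with hN
  have h_cancel : (M - N) * U = 0 := by
    rw [Matrix.sub_mul, hN, Matrix.mul_assoc (M * U), hU, Matrix.mul_one, sub_self]
  have h_orth : trace (Nᵀ * (M - N)) = 0 := by
    rw [hN, transpose_mul, transpose_transpose, Matrix.mul_assoc, trace_mul_comm,
      Matrix.mul_assoc, h_cancel, Matrix.mul_zero, trace_zero]
  have h_norm : frobSq N = frobSq (M * U) := by
    rw [frobSq_eq_trace_transpose_mul_self, frobSq_eq_trace_transpose_mul_self, hN, transpose_mul,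
      transpose_transpose, Matrix.mul_assoc, trace_mul_comm, ← Matrix.mul_assoc, Matrix.mul_assoc,
      hU, Matrix.mul_one]
  linarith [frobSq_add_two_mul_trace_le N M]

end Frobenius

section Rank

variable {𝕜 m n : Type*} [RCLike 𝕜] [Finite m] [Fintype n]

theorem rank_add_finrank_ker_toEuclideanLin [DecidableEq n] (A : Matrix m n 𝕜) :
    A.rank + Module.finrank 𝕜 (LinearMap.ker A.toEuclideanLin) = Fintype.card n := by
  have := Fintype.ofFinite m
  rw [rank_eq_finrank_range_toLin A (PiLp.basisFun 2 𝕜 m) (PiLp.basisFun 2 𝕜 n),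
    ← toLpLin_eq_toLin, LinearMap.finrank_range_add_finrank_ker, finrank_euclideanSpace]

theorem exists_conjTranspose_mul_self_eq_one_and_mul_eq_zero (A : Matrix m n 𝕜) :
    ∃ U : Matrix n (Fin (Fintype.card n - A.rank)) 𝕜, Uᴴ * U = 1 ∧ A * U = 0 := by
  classical
  have h_finrank : Module.finrank 𝕜 (LinearMap.ker A.toEuclideanLin) = Fintype.card n - A.rank :=
    Nat.eq_sub_of_add_eq' (rank_add_finrank_ker_toEuclideanLin A)
  let b := (stdOrthonormalBasis 𝕜 (LinearMap.ker A.toEuclideanLin)).reindex (finCongr h_finrank)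
  refine ⟨of fun j i => (b i : EuclideanSpace 𝕜 n) j, ?_, ?_⟩
  · ext i j
    have h_inner := orthonormal_iff_ite.mp b.orthonormal i j
    rw [Submodule.coe_inner, PiLp.inner_apply] at h_inner
    simpa [Matrix.mul_apply, Matrix.one_apply, mul_comm] using h_inner
  · ext i j
    have h_ker : A.toEuclideanLin (b j) = 0 := (b j).2
    exact congrArg (fun v : EuclideanSpace 𝕜 m => v i) h_ker

theorem card_sub_rank_le_frobSq_one_sub [DecidableEq n] (B : Matrix n n ℝ) :
    (Fintype.card n : ℝ) - B.rank ≤ frobSq (1 - B) := by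
  obtain ⟨U, hU, hBU⟩ := exists_conjTranspose_mul_self_eq_one_and_mul_eq_zero B
  rw [conjTranspose_eq_transpose_of_trivial] at hU
  have h_fix : (1 - B) * U = U := by rw [Matrix.sub_mul, Matrix.one_mul, hBU, sub_zero]
  calc (Fintype.card n : ℝ) - B.rank
      = (Fintype.card n - B.rank : ℕ) := (Nat.cast_sub B.rank_le_card_width).symm
    _ = frobSq U := by rw [frobSq_eq_card_of_transpose_mul_self_eq_one hU, Fintype.card_fin]
    _ = frobSq ((1 - B) * U) := by rw [h_fix]
    _ ≤ frobSq (1 - B) := frobSq_mul_le_of_transpose_mul_self_eq_one hU _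

end Rank

section Ridge

variable {m n k : Type*} [Fintype m] [Fintype n] [Fintype k]

theorem frobSq_sub_add_mul_frobSq_le_of_normal_eq {lam : ℝ} (hlam : 0 ≤ lam)
    {A : Matrix m n ℝ} {B : Matrix k n ℝ} {P : Matrix m k ℝ}
    (hP : lam • P = A * (B - Pᵀ * A)ᵀ) (Q : Matrix m k ℝ) :
    frobSq (B - Pᵀ * A) + lam * frobSq P ≤ frobSq (B - Qᵀ * A) + lam * frobSq Q := by
  have h_residual := frobSq_add_two_mul_trace_le (B - Pᵀ * A) (B - Qᵀ * A)
  have h_penalty := mul_le_mul_of_nonneg_left (frobSq_add_two_mul_trace_le P Q) hlam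
  have h_diff : B - Qᵀ * A - (B - Pᵀ * A) = -((Q - P)ᵀ * A) := by
    rw [transpose_sub, Matrix.sub_mul]
    abel
  have h_stationary : trace ((B - Pᵀ * A)ᵀ * (B - Qᵀ * A - (B - Pᵀ * A)))
      = -(lam * trace (Pᵀ * (Q - P))) :=
    calc trace ((B - Pᵀ * A)ᵀ * (B - Qᵀ * A - (B - Pᵀ * A)))
        = -trace ((B - Pᵀ * A)ᵀ * (Q - P)ᵀ * A) := by
          rw [h_diff, Matrix.mul_neg, trace_neg, Matrix.mul_assoc]
      _ = -trace (lam • P * (Q - P)ᵀ) := by rw [trace_mul_cycle, ← hP]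
      _ = -(lam * trace (Pᵀ * (Q - P))) := by
          rw [Matrix.smul_mul, trace_smul, smul_eq_mul, ← trace_transpose_mul, transpose_transpose,
            trace_mul_comm]
  linarith

theorem isUnit_det_mul_transpose_add_smul_one [DecidableEq m] (A : Matrix m n ℝ) {lam : ℝ}
    (hlam : 0 < lam) : IsUnit (A * Aᵀ + lam • (1 : Matrix m m ℝ)).det := by
  have h_gram : (A * Aᵀ).PosSemidef := by simpa using posSemidef_self_mul_conjTranspose A
  exact (isUnit_iff_isUnit_det _).mp
    (PosDef.posSemidef_add h_gram (PosDef.one.smul hlam)).isUnit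

end Ridge

section Fpinv

variable {I J : ℕ} (A : Matrix (Fin I) (Fin J) ℝ)

theorem Fpinv_zero (lam : ℝ) : Fpinv A lam 0 = J := by
  have h_one : frobSq (1 : Matrix (Fin J) (Fin J) ℝ) = J := by
    simpa using frobSq_eq_card_of_transpose_mul_self_eq_one (U := (1 : Matrix (Fin J) (Fin J) ℝ))
  simp [Fpinv, frobSq_zero, h_one]

variable {lam : ℝ}

theorem sub_rank_le_Fpinv (hlam : 0 ≤ lam) (P : Matrix (Fin I) (Fin J) ℝ) :
    (J : ℝ) - A.rank ≤ Fpinv A lam P :=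
  calc (J : ℝ) - A.rank
      ≤ J - (Pᵀ * A).rank := by gcongr; exact rank_mul_le_right Pᵀ A
    _ ≤ frobSq (1 - Pᵀ * A) := by simpa using card_sub_rank_le_frobSq_one_sub (Pᵀ * A)
    _ ≤ Fpinv A lam P := le_add_of_nonneg_right (mul_nonneg hlam (frobSq_nonneg P))

theorem smul_PstarId_eq (hlam : 0 < lam) :
    lam • PstarId A lam = A * (1 - (PstarId A lam)ᵀ * A)ᵀ := by
  have h_solve : (A * Aᵀ + lam • (1 : Matrix (Fin I) (Fin I) ℝ)) * PstarId A lam = A :=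
    mul_nonsing_inv_cancel_left _ A (isUnit_det_mul_transpose_add_smul_one A hlam)
  rw [Matrix.add_mul, Matrix.smul_mul, Matrix.one_mul] at h_solve
  rw [transpose_sub, transpose_one, transpose_mul, transpose_transpose, Matrix.mul_sub,
    Matrix.mul_one, ← Matrix.mul_assoc]
  exact eq_sub_of_add_eq' h_solve

theorem Fpinv_PstarId_le (hlam : 0 < lam) (P : Matrix (Fin I) (Fin J) ℝ) :
    Fpinv A lam (PstarId A lam) ≤ Fpinv A lam P :=
  frobSq_sub_add_mul_frobSq_le_of_normal_eq hlam.le (smul_PstarId_eq A hlam) P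

end Fpinv

/-- For `λ ≥ 0` and every `P`, `F_λ(P) ≥ J − rank(A)`; moreover for `λ > 0` the
minimum value satisfies `F_λ(P*_λ) ≤ J`. -/
theorem Fpinv_lower_and_upper_bounds {I J : ℕ}
    (A : Matrix (Fin I) (Fin J) ℝ) (lam : ℝ) (hlam : 0 ≤ lam) :
    (∀ P : Matrix (Fin I) (Fin J) ℝ, Fpinv A lam P ≥ (J : ℝ) - (A.rank : ℝ)) ∧
    (0 < lam → Fpinv A lam (PstarId A lam) ≤ (J : ℝ)) := by
  refine ⟨sub_rank_le_Fpinv A hlam, fun hpos => ?_⟩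
  calc Fpinv A lam (PstarId A lam)
      ≤ Fpinv A lam 0 := Fpinv_PstarId_le A hpos 0
    _ = J := Fpinv_zero A lam
end
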